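/- arXiv:1003.0708 — 3 statements merged into one kernel-verified Lean document; each statement's English description precedes it below -/
import Mathlib

section
/- Let Γ ⊂ PSL(3,ℂ) be a discrete group and let Ω ⊆ ℙ²_ℂ be a maximal open set on which Γ acts properly discontinuously. If LiG(Ω(Γ)) ≤ 2, where Ω(Γ) is the Kulkarni discontinuity region, then LiG(Ω) ≤ 2. -/
/-!
Suppose that the complement of `Ω` contains three lines in general position. Then `Ω` is contained
in the Kulkarni region `Ω(Γ)`, on which `Γ` acts properly discontinuously. Maximality gives
`Ω = Ω(Γ)`, so the complement of `Ω(Γ)` contains the three lines as well.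

The lines are needed to see that `Ω` is disjoint from `L2 Γ`. If `w ∈ Ω` is a cluster point of
`Γ K`, there are `γ → ∞` in `Γ` and `v → w` with `γ v ∈ K`. Rescale matrices representing the `γ` so
that they have a limit `S ≠ 0`. Some line `φ = 0` outside `Ω` satisfies `φ ∘ S ≠ 0`. Its preimages
under the `γ` also lie outside `Ω`, hence so does their limit, which is the line `φ ∘ S = 0`.
Therefore `S w ≠ 0`, and both `γ v` and `γ w` converge to `[S w]`. This point lies in `K` and in
`L1 Γ`, which is impossible for `K` in the complement of `L0 Γ ∪ L1 Γ`.
-/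

open scoped LinearAlgebra.Projectivization
open Projectivization Matrix Topology

noncomputable section

abbrev V3 : Type := Fin 3 → ℂ
abbrev SL3 := Matrix.SpecialLinearGroup (Fin 3) ℂ
abbrev PSL3 := SL3 ⧸ Subgroup.center SL3
abbrev P2 := ℙ ℂ V3

instance : TopologicalSpace P2 := instTopologicalSpaceQuotient

/-- The action of `SL(3,ℂ)` on `ℙ²_ℂ`. -/
def smulP2 (A : SL3) : P2 → P2 :=
  Projectivization.map ((Matrix.SpecialLinearGroup.toLin' A : V3 ≃ₗ[ℂ] V3) : V3 →ₗ[ℂ] V3)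
    (Matrix.SpecialLinearGroup.toLin' A).injective

lemma smulP2_mk (A : SL3) (v : V3) (hv : v ≠ 0) :
    smulP2 A (Projectivization.mk ℂ v hv) =
      Projectivization.mk ℂ (Matrix.SpecialLinearGroup.toLin' A v)
        ((Matrix.SpecialLinearGroup.toLin' A).map_ne_zero_iff.mpr hv) := rfl

lemma smulP2_one : smulP2 (1 : SL3) = id := by
  funext x
  induction x using Projectivization.ind with
  | h v hv => simp [smulP2_mk]

lemma smulP2_mul (A B : SL3) : smulP2 (A * B) = smulP2 A ∘ smulP2 B := by
  funext x
  induction x using Projectivization.ind with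
  | h v hv =>
    simp only [smulP2_mk, Function.comp_apply, _root_.map_mul]
    rfl

lemma continuous_smulP2 (A : SL3) : Continuous (smulP2 A) := by
  unfold smulP2 Projectivization.map
  exact Continuous.quotient_map'
    ((((Matrix.SpecialLinearGroup.toLin' A : V3 ≃ₗ[ℂ] V3) :
        V3 →ₗ[ℂ] V3).continuous_of_finiteDimensional.comp
      continuous_subtype_val).subtype_mk _) _
lemma smulP2_center (A : SL3) (hA : A ∈ Subgroup.center SL3) : smulP2 A = id := by
  obtain ⟨r, hr3, hrA⟩ := Matrix.SpecialLinearGroup.mem_center_iff.mp hA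
  have hr0 : r ≠ 0 := by
    intro h
    rw [h] at hr3
    simp at hr3
  funext x
  induction x using Projectivization.ind with
  | h v hv =>
    have hAv : Matrix.SpecialLinearGroup.toLin' A v = r • v := by
      rw [Matrix.SpecialLinearGroup.toLin'_apply]
      have : ((A : Matrix (Fin 3) (Fin 3) ℂ)) = Matrix.scalar (Fin 3) r := by
        rw [← hrA]
      rw [this]
      funext i
      simp [Matrix.toLin'_apply, Matrix.scalar, Matrix.mulVec_diagonal]
  
    simp only [smulP2_mk, id_eq]
    rw [Projectivization.mk_eq_mk_iff]
    exact ⟨Units.mk0 r hr0, by simp [hAv]⟩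

/-- The action of `SL(3,ℂ)` on `ℙ²` as a homomorphism into permutations. -/
def slPerm : SL3 →* Equiv.Perm P2 where
  toFun A :=
    { toFun := smulP2 A
      invFun := smulP2 A⁻¹
      left_inv := fun x => by
        have := (smulP2_mul A⁻¹ A).symm
        simp only [inv_mul_cancel, smulP2_one] at this
        exact congrFun this x
      right_inv := fun x => by
        have := (smulP2_mul A A⁻¹).symm
        simp only [mul_inv_cancel, smulP2_one] at this
        exact congrFun this x }
  map_one' := by
    ext x
    simp [smulP2_one]
  map_mul' A B := by
    ext x
    simp [smulP2_mul]

/-- The action of `PSL(3,ℂ)` on `ℙ²` as a homomorphism into permutations. -/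
def actHom : PSL3 →* Equiv.Perm P2 :=
  QuotientGroup.lift (Subgroup.center SL3) slPerm (by
    intro A hA
    ext x
    simpa [slPerm] using congrFun (smulP2_center A hA) x)

/-- The action of an element of `PSL(3,ℂ)` on `ℙ²`. -/
def pact (g : PSL3) : P2 → P2 := actHom g

instance : MulAction PSL3 P2 where
  smul g x := pact g x
  one_smul x := by
    show pact 1 x = x
    simp [pact]
  mul_smul g h x := by
    show pact (g * h) x = pact g (pact h x)
    simp [pact]

lemma pact_mk (A : SL3) : pact ((QuotientGroup.mk A : PSL3)) = smulP2 A := by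
  funext x
  simp [pact, actHom, slPerm]

lemma continuous_pact (g : PSL3) : Continuous (pact g) := by
  obtain ⟨A, rfl⟩ := QuotientGroup.mk_surjective g
  rw [pact_mk]
  exact continuous_smulP2 A

/-- The action of an element of `PSL(3,ℂ)` on `ℙ²`, as a continuous map. -/
def pactCM (g : PSL3) : C(P2, P2) := ⟨pact g, continuous_pact g⟩
instance : TopologicalSpace SL3 := instTopologicalSpaceSubtype

/-- A complex line in `ℙ²_ℂ`: the set of points whose representing vectors lie in
a fixed 2-dimensional complex linear subspace of `ℂ³`. -/
def IsLine (ℓ : Set P2) : Prop :=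
  ∃ W : Submodule ℂ V3, Module.finrank ℂ W = 2 ∧ ℓ = {p : P2 | p.submodule ≤ W}

/-- The set of complex lines contained in a given subset of `ℙ²_ℂ`. -/
def linesIn (S : Set P2) : Set (Set P2) := {ℓ | IsLine ℓ ∧ ℓ ⊆ S}

/-- A family of lines is in general position if no point lies on three
(pairwise distinct) lines of the family. -/
def InGenPos (L : Set (Set P2)) : Prop :=
  ∀ p : P2, ∀ ℓ₁ ∈ L, ∀ ℓ₂ ∈ L, ∀ ℓ₃ ∈ L,
    p ∈ ℓ₁ → p ∈ ℓ₂ → p ∈ ℓ₃ → ℓ₁ = ℓ₂ ∨ ℓ₁ = ℓ₃ ∨ ℓ₂ = ℓ₃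

/-- The families of complex lines in general position contained in the complement of `Ω`. -/
def genFamilies (Ω : Set P2) : Set (Set (Set P2)) :=
  {L | (∀ ℓ ∈ L, IsLine ℓ ∧ ℓ ⊆ Ωᶜ) ∧ InGenPos L}

/-- `Li Ω` : the number (in `ℕ∞`) of complex lines contained in the complement of `Ω`. -/
def Li (Ω : Set P2) : ℕ∞ := (linesIn Ωᶜ).encard

/-- `LiG Ω` : the maximal number (in `ℕ∞`) of complex lines in general position contained
in the complement of `Ω`. -/
def LiG (Ω : Set P2) : ℕ∞ := ⨆ L ∈ genFamilies Ω, L.encard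

/-- `Γ` acts properly discontinuously on the nonempty open invariant set `Ω`. -/
def ActsPropDiscOn (Γ : Subgroup PSL3) (Ω : Set P2) : Prop :=
  Ω.Nonempty ∧ IsOpen Ω ∧ (∀ γ ∈ Γ, pact γ '' Ω = Ω) ∧
    ∀ K : Set P2, K ⊆ Ω → IsCompact K →
      {γ : PSL3 | γ ∈ Γ ∧ ((pact γ '' K) ∩ K).Nonempty}.Finite

/-- `Ω` is a maximal open set on which `Γ` acts properly discontinuously. -/
def MaxDisc (Γ : Subgroup PSL3) (Ω : Set P2) : Prop :=
  ActsPropDiscOn Γ Ω ∧ ∀ Ω' : Set P2, ActsPropDiscOn Γ Ω' → Ω ⊆ Ω' → Ω' = Ω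

/-- `L0 Γ` : the closure of the set of points with infinite isotropy group. -/
def L0 (Γ : Subgroup PSL3) : Set P2 :=
  closure {z : P2 | {γ : PSL3 | γ ∈ Γ ∧ pact γ z = z}.Infinite}

/-- The cluster points of the orbit `Γ z`. -/
def orbitCluster (Γ : Subgroup PSL3) (z : P2) : Set P2 :=
  {w : P2 | ∀ U ∈ nhds w, {γ : PSL3 | γ ∈ Γ ∧ pact γ z ∈ U}.Infinite}

/-- The cluster points of `Γ K` for a set `K`. -/
def setCluster (Γ : Subgroup PSL3) (K : Set P2) : Set P2 :=
  {w : P2 | ∀ U ∈ nhds w, {γ : PSL3 | γ ∈ Γ ∧ ((pact γ '' K) ∩ U).Nonempty}.Infinite}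

/-- `L1 Γ` : the closure of the set of cluster points of orbits `Γ z`, `z ∉ L0 Γ`. -/
def L1 (Γ : Subgroup PSL3) : Set P2 :=
  closure (⋃ z ∈ (L0 Γ)ᶜ, orbitCluster Γ z)

/-- `L2 Γ` : the closure of the set of cluster points of `Γ K`,
`K` a compact subset of `ℙ²_ℂ ∖ (L0 Γ ∪ L1 Γ)`. -/
def L2 (Γ : Subgroup PSL3) : Set P2 :=
  closure (⋃ K ∈ {K : Set P2 | IsCompact K ∧ K ⊆ (L0 Γ ∪ L1 Γ)ᶜ}, setCluster Γ K)

/-- The Kulkarni limit set `Λ(Γ)`. -/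
def kulkarniLimit (Γ : Subgroup PSL3) : Set P2 := L0 Γ ∪ L1 Γ ∪ L2 Γ

/-- The Kulkarni discontinuity region `Ω(Γ)`. -/
def kulkarniRegion (Γ : Subgroup PSL3) : Set P2 := (kulkarniLimit Γ)ᶜ

/-- `C(Γ)` : the closure of the union of the Kulkarni limit sets of the cyclic
subgroups generated by the elements of `Γ`. -/
def CSet (Γ : Subgroup PSL3) : Set P2 :=
  closure (⋃ γ ∈ Γ, kulkarniLimit (Subgroup.zpowers γ))

/-- The equicontinuity set of `Γ` : points having a neighborhood `U` on which the
restrictions of the elements of `Γ` form a normal family, i.e. a relatively compact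
subset of `C(U, ℙ²_ℂ)` for the compact-open topology. -/
def eqSet (Γ : Subgroup PSL3) : Set P2 :=
  {z : P2 | ∃ U : Set P2, IsOpen U ∧ z ∈ U ∧
    IsCompact (closure {f : C(U, P2) | ∃ γ ∈ Γ, f = (pactCM γ).restrict U})}

/-- A vertex of a family `L` of lines lying in the complement of `Ω`. -/
def IsVertex (Ω : Set P2) (L : Set (Set P2)) (v : P2) : Prop :=
  ∃ ℓ₁ ∈ L, ∃ ℓ₂ ∈ L, ℓ₁ ≠ ℓ₂ ∧ ∃ C : Set (Set P2), C.Infinite ∧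
    (∀ ℓ ∈ C, IsLine ℓ ∧ ℓ ⊆ Ωᶜ) ∧ ℓ₁ ∩ ℓ₂ ∩ ⋂₀ C = {v}

open Classical

/-- Projection from the point `p` onto the line determined by `W` : `projPt p W x` is
the intersection point of the line through `p` and `x` with the line determined by `W`
(junk value if it is not unique). -/
def projPt (p : P2) (W : Submodule ℂ V3) (x : P2) : P2 :=
  if h : ∃ y : P2, y.submodule ≤ W ∧ y.submodule ≤ p.submodule ⊔ x.submodule
  then h.choose else x

/-! ### Projective spaces with the quotient topology -/

section Topology

variable {K V : Type*} [AddCommGroup V] [TopologicalSpace V]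

section DivisionRing

variable [DivisionRing K] [Module K V]

/-- The quotient topology. On `P2` it agrees by definition with the instance above. -/
instance projectivizationTopology : TopologicalSpace (ℙ K V) := instTopologicalSpaceQuotient

variable [ContinuousConstSMul K V]

lemma isOpenQuotientMap_mk' :
    IsOpenQuotientMap (Projectivization.mk' K : {v : V // v ≠ 0} → ℙ K V) := by
  have : ContinuousConstSMul Kˣ {v : V // v ≠ 0} :=
    ⟨fun a => (continuous_subtype_val.const_smul a).subtype_mk _⟩
  have hsetoid : projectivizationSetoid K V = MulAction.orbitRel Kˣ {v : V // v ≠ 0} :=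
    Setoid.ext fun v w => (Units.orbitRel_nonZero_iff K V v w).symm
  change IsOpenQuotientMap (Quotient.mk (projectivizationSetoid K V))
  rw [hsetoid]
  exact MulAction.isOpenQuotientMap_quotientMk

instance [LocallyCompactSpace V] [T1Space V] : LocallyCompactSpace (ℙ K V) :=
  have : LocallyCompactSpace {v : V // v ≠ 0} := (isOpen_ne (x := (0 : V))).locallyCompactSpace
  isOpenQuotientMap_mk'.locallyCompactSpace

end DivisionRing

instance [Field K] [TopologicalSpace K] [Module K V] [ContinuousSMul K V] [SeparatingDual K V]
    [T2Space V] : T2Space (ℙ K V) := by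
  rw [t2Space_iff_of_isOpenQuotientMap isOpenQuotientMap_mk']
  have hrel : {x : {v : V // v ≠ 0} × {v : V // v ≠ 0} |
      Projectivization.mk' K x.1 = Projectivization.mk' K x.2} =
      ⋂ φ : StrongDual K V, {x | φ x.1.1 • x.2.1 = φ x.2.1 • x.1.1} := by
    ext ⟨⟨v, hv⟩, ⟨w, hw⟩⟩
    simp only [Projectivization.mk'_eq_mk, Projectivization.mk_eq_mk_iff', Set.mem_ofPred_eq,
      Set.mem_iInter]
    constructor
    · rintro ⟨a, rfl⟩ φ
      simp only [map_smul, smul_smul, smul_eq_mul, mul_comm]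
    · intro h
      obtain ⟨φ, hφ⟩ := SeparatingDual.exists_ne_zero (R := K) hw
      exact ⟨φ v / φ w, by rw [div_eq_inv_mul, mul_smul, h φ, inv_smul_smul₀ hφ]⟩
  rw [hrel]
  refine isClosed_iInter fun φ => isClosed_eq ?_ ?_ <;> fun_prop

end Topology

/-! ### Limits of projective transformations -/

/-- The hyperplane of `ℙ K V` on which the linear form `φ` vanishes. The zero form is allowed, and
gives all of `ℙ K V`. -/
def hyperplane {K V : Type*} [Field K] [AddCommGroup V] [Module K V] (φ : Module.Dual K V) :
    Set (ℙ K V) :=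
  {p | p.submodule ≤ LinearMap.ker φ}

section Hyperplane

variable {K V W : Type*} [Field K] [AddCommGroup V] [Module K V] [AddCommGroup W] [Module K W]

lemma mk_mem_hyperplane {φ : Module.Dual K V} {v : V} (hv : v ≠ 0) :
    Projectivization.mk K v hv ∈ hyperplane φ ↔ φ v = 0 := by
  simp [hyperplane, Submodule.span_singleton_le_iff_mem]

lemma preimage_map_hyperplane (φ : Module.Dual K W) {f : V →ₗ[K] W} (hf : Function.Injective f) :
    Projectivization.map f hf ⁻¹' hyperplane φ = hyperplane (φ ∘ₗ f) := by
  ext p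
  induction p using Projectivization.ind with
  | h v hv =>
    simp only [Set.mem_preimage, Projectivization.map_mk, mk_mem_hyperplane, LinearMap.comp_apply]

lemma map_smul_eq_map {f : V →ₗ[K] W} (hf : Function.Injective f) {c : K}
    (hcf : Function.Injective (c • f)) : Projectivization.map (c • f) hcf =
      Projectivization.map f hf := by
  funext p
  induction p using Projectivization.ind with
  | h v hv => exact (Projectivization.mk_eq_mk_iff' K _ _ _ _).mpr ⟨c, rfl⟩

end Hyperplane

section Limits

open Filter

section TopologicalVectorSpace

variable {K V W α : Type*} [Field K] [TopologicalSpace K] [IsTopologicalDivisionRing K] [T1Space K]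
  [AddCommGroup V] [Module K V] [TopologicalSpace V] [ContinuousAdd V] [ContinuousSMul K V]
  [AddCommGroup W] [Module K W] [TopologicalSpace W] {l : Filter α}

lemma exists_tendsto_eventually_apply_eq_zero {ψ : α → Module.Dual K V} {v w : V} {c : K}
    (hc : c ≠ 0) (hv : Tendsto (fun a => ψ a v) l (𝓝 c)) (hw : Tendsto (fun a => ψ a w) l (𝓝 0)) :
    ∃ z : α → V, Tendsto z l (𝓝 w) ∧ ∀ᶠ a in l, ψ a (z a) = 0 := by
  -- `z a` is the zero of `ψ a` on the line through `w` in the direction `v`.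
  refine ⟨fun a => w + (-(ψ a w / ψ a v)) • v, ?_, ?_⟩
  · simpa using ((hw.div hv hc).neg.smul_const v).const_add w
  · filter_upwards [hv.eventually_ne hc] with a ha
    simp [ha]

/-- An analogue for linear forms of Hurwitz's theorem on limits of zero-free functions. -/
lemma disjoint_hyperplane_of_tendsto [T1Space V] [l.NeBot] {ψ : α → Module.Dual K V}
    {ψ₀ : Module.Dual K V} {Ω : Set (ℙ K V)} (hΩ : IsOpen Ω)
    (hψ : ∀ᶠ a in l, Disjoint (hyperplane (ψ a)) Ω)
    (hlim : ∀ v, Tendsto (fun a => ψ a v) l (𝓝 (ψ₀ v))) (hψ₀ : ψ₀ ≠ 0) :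
    Disjoint (hyperplane ψ₀) Ω := by
  rw [Set.disjoint_left]
  intro p hp hpΩ
  induction p using Projectivization.ind with
  | h w hw =>
    obtain ⟨v, hv⟩ : ∃ v, ψ₀ v ≠ 0 := by simpa using DFunLike.ne_iff.mp hψ₀
    have hw₀ : Tendsto (fun a => ψ a w) l (𝓝 0) := (mk_mem_hyperplane hw).mp hp ▸ hlim w
    obtain ⟨z, hzw, hz⟩ := exists_tendsto_eventually_apply_eq_zero hv (hlim v) hw₀
    have hΩ_near : ∀ᶠ x in 𝓝 w, ∀ hx : x ≠ 0, Projectivization.mk K x hx ∈ Ω := by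
      have hpre : Projectivization.mk' K ⁻¹' Ω ∈ 𝓝 (⟨w, hw⟩ : {v : V // v ≠ 0}) :=
        (hΩ.preimage isOpenQuotientMap_mk'.continuous).mem_nhds hpΩ
      rw [nhds_subtype_eq_comap, mem_comap] at hpre
      obtain ⟨O, hO, hOΩ⟩ := hpre
      filter_upwards [hO] with x hxO hx using hOΩ (a := ⟨x, hx⟩) hxO
    obtain ⟨a, haΩ, ha, ha₀, hza⟩ :=
      ((hzw.eventually hΩ_near).and (hz.and ((hzw.eventually_ne hw).and hψ))).exists
    exact Set.disjoint_left.mp hza ((mk_mem_hyperplane ha₀).mpr ha) (haΩ ha₀)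

lemma limit_apply_ne_zero_of_mapsTo [T1Space V] [l.NeBot] {T : α → V →ₗ[K] W}
    (hT : ∀ a, Function.Injective (T a)) {S : V →ₗ[K] W}
    (hlim : ∀ v, Tendsto (fun a => T a v) l (𝓝 (S v))) (hS : S ≠ 0)
    {Ω : Set (ℙ K V)} {U : Set (ℙ K W)} (hΩ : IsOpen Ω)
    (hTU : ∀ᶠ a in l, Set.MapsTo (Projectivization.map (T a) (hT a)) Ω U)
    (hU : ∀ q, ∃ φ : StrongDual K W, q ∉ hyperplane φ.toLinearMap ∧
      Disjoint (hyperplane φ.toLinearMap) U)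
    {v : V} {hv : v ≠ 0} (hvΩ : Projectivization.mk K v hv ∈ Ω) : S v ≠ 0 := by
  obtain ⟨x, hx⟩ : ∃ x, S x ≠ 0 := by simpa using DFunLike.ne_iff.mp hS
  obtain ⟨φ, hφx, hφU⟩ := hU (Projectivization.mk K (S x) hx)
  have hφS : φ.toLinearMap ∘ₗ S ≠ 0 := fun h =>
    hφx ((mk_mem_hyperplane hx).mpr (LinearMap.congr_fun h x))
  have hdisj : Disjoint (hyperplane (φ.toLinearMap ∘ₗ S)) Ω := by
    refine disjoint_hyperplane_of_tendsto hΩ (ψ := fun a => φ.toLinearMap ∘ₗ T a) ?_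
      (fun y => (φ.continuous.tendsto (S y)).comp (hlim y)) hφS
    filter_upwards [hTU] with a ha
    rw [← preimage_map_hyperplane _ (hT a)]
    exact (hφU.preimage _).mono_right ha
  intro hSv
  exact Set.disjoint_left.mp hdisj ((mk_mem_hyperplane hv).mpr (by simp [hSv])) hvΩ

end TopologicalVectorSpace

variable {K V W α : Type*} [NontriviallyNormedField K] [NormedAddCommGroup V] [NormedSpace K V]
  [NormedAddCommGroup W] [NormedSpace K W]

lemma exists_smul_tendsto_ne_zero (K : Type*) [NontriviallyNormedField K] [NormedSpace K V]
    [ProperSpace V] (u : Ultrafilter α) {x : α → V} (hx : ∀ a, x a ≠ 0) :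
    ∃ c : α → K, (∀ a, c a ≠ 0) ∧ ∃ y, y ≠ 0 ∧ Tendsto (fun a => c a • x a) u (𝓝 y) := by
  obtain ⟨d, hd⟩ := NormedField.exists_one_lt_norm K
  choose c hc hle hge _ using fun a => rescale_to_shell hd one_pos (hx a)
  have hmem : ∀ a, c a • x a ∈ Metric.closedBall (0 : V) 1 := fun a => by simpa using (hle a).le
  obtain ⟨y, -, hy⟩ := (isCompact_closedBall (0 : V) 1).ultrafilter_le_nhds'
    (u.map fun a => c a • x a) (Eventually.of_forall (f := (u : Filter α)) hmem)
  have hy_lim : Tendsto (fun a => c a • x a) u (𝓝 y) := hy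
  have hy_norm : 1 / ‖d‖ ≤ ‖y‖ := ge_of_tendsto' hy_lim.norm hge
  exact ⟨c, hc, y, norm_pos_iff.mp (hy_norm.trans_lt' (by positivity)), hy_lim⟩

lemma tendsto_map_prod_nhds {l : Filter α} {T : α → V →L[K] W}
    (hT : ∀ a, Function.Injective (T a).toLinearMap) {S : V →L[K] W} (hS : Tendsto T l (𝓝 S))
    {v : V} (hv : v ≠ 0) (hSv : S v ≠ 0) :
    Tendsto (fun x : α × ℙ K V => Projectivization.map (T x.1).toLinearMap (hT x.1) x.2)
      (l ×ˢ 𝓝 (Projectivization.mk K v hv)) (𝓝 (Projectivization.mk K (S v) hSv)) := by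
  have hnhds : 𝓝 (Projectivization.mk K v hv) = map (Projectivization.mk' K) (𝓝 ⟨v, hv⟩) :=
    (isOpenQuotientMap_mk'.map_nhds_eq _).symm
  rw [hnhds, prod_map_right, tendsto_map'_iff]
  refine ((isOpenQuotientMap_mk' (K := K) (V := W)).continuous.tendsto ⟨S v, hSv⟩).comp
    (f := fun x : α × {v : V // v ≠ 0} => ⟨T x.1 x.2, (map_ne_zero_iff _ (hT x.1)).mpr x.2.2⟩)
    (tendsto_subtype_rng.mpr ?_)
  have hlim : Tendsto (fun x : α × {v : V // v ≠ 0} => (T x.1, x.2.1)) (l ×ˢ 𝓝 ⟨v, hv⟩)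
      (𝓝 (S, v)) :=
    (hS.comp tendsto_fst).prodMk_nhds ((continuous_subtype_val.tendsto _).comp tendsto_snd)
  exact (isBoundedBilinearMap_apply.continuous.tendsto (S, v)).comp hlim

/-- An analogue of Montel's theorem. Convergence along `u ×ˢ 𝓝 p` means that the maps converge to
`q` at every family of points tending to `p`. -/
theorem exists_tendsto_map_prod_nhds [ProperSpace K] [FiniteDimensional K V]
    [FiniteDimensional K W] (u : Ultrafilter α) {T : α → V →ₗ[K] W}
    (hT : ∀ a, Function.Injective (T a)) {Ω : Set (ℙ K V)} {U : Set (ℙ K W)} (hΩ : IsOpen Ω)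
    (hTU : ∀ᶠ a in (u : Filter α), Set.MapsTo (Projectivization.map (T a) (hT a)) Ω U)
    (hU : ∀ q, ∃ φ : StrongDual K W, q ∉ hyperplane φ.toLinearMap ∧
      Disjoint (hyperplane φ.toLinearMap) U)
    {p : ℙ K V} (hp : p ∈ Ω) :
    ∃ q, Tendsto (fun x : α × ℙ K V => Projectivization.map (T x.1) (hT x.1) x.2)
      ((u : Filter α) ×ˢ 𝓝 p) (𝓝 q) := by
  induction p using Projectivization.ind with
  | h v hv =>
    have : ProperSpace (V →L[K] W) := FiniteDimensional.proper K _
    have hT_ne : ∀ a, (T a).toContinuousLinearMap ≠ 0 := fun a h =>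
      hv ((map_eq_zero_iff _ (hT a)).mp congr($h v))
    obtain ⟨c, hc, S, hS, hlim⟩ := exists_smul_tendsto_ne_zero K u hT_ne
    have hcT : ∀ a, Function.Injective (c a • T a) := fun a =>
      (smul_right_injective W (hc a)).comp (hT a)
    simp only [fun a => (map_smul_eq_map (hT a) (hcT a)).symm] at hTU ⊢
    have hSv : S v ≠ 0 := by
      refine limit_apply_ne_zero_of_mapsTo hcT (S := S.toLinearMap) (fun y => ?_)
        (fun h => hS (ContinuousLinearMap.coe_injective h)) hΩ hTU hU hp
      exact ((ContinuousLinearMap.apply K W y).continuous.tendsto S).comp hlim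
    exact ⟨_, tendsto_map_prod_nhds hcT hlim hv hSv⟩

end Limits

/-! ### Lines in the complement of an open set -/

section Lines

variable {Ω : Set P2}

lemma IsLine.exists_eq_hyperplane {ℓ : Set P2} (h : IsLine ℓ) :
    ∃ φ : Module.Dual ℂ V3, ℓ = hyperplane φ := by
  obtain ⟨W, hW, rfl⟩ := h
  have hW_lt : W < ⊤ := lt_top_iff_ne_top.mpr (by rintro rfl; simp at hW)
  obtain ⟨φ, hφ, hWφ⟩ := W.exists_le_ker_of_lt_top hW_lt
  have hrank : Module.finrank ℂ (LinearMap.ker φ) + 1 = 3 := by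
    simpa using Module.Dual.finrank_ker_add_one_of_ne_zero hφ
  rw [Submodule.eq_of_le_of_finrank_le hWφ (by lia)]
  exact ⟨φ, rfl⟩

lemma exists_isLine_notMem_of_two_lt_liG (h : 2 < LiG Ω) (p : P2) :
    ∃ ℓ, IsLine ℓ ∧ ℓ ⊆ Ωᶜ ∧ p ∉ ℓ := by
  obtain ⟨L, hL⟩ := lt_iSup_iff.mp h
  obtain ⟨⟨hlines, hgen⟩, hcard⟩ := lt_iSup_iff.mp hL
  obtain ⟨T, hTL, hT⟩ := Set.exists_subset_encard_eq (Order.add_one_le_of_lt hcard)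
  obtain ⟨a, b, c, hab, hac, hbc, rfl⟩ := Set.encard_eq_three.mp (hT.trans two_add_one_eq_three)
  by_contra! hp
  have hmem : ∀ ℓ ∈ L, p ∈ ℓ := fun ℓ hℓ => hp ℓ (hlines ℓ hℓ).1 (hlines ℓ hℓ).2
  have ha : a ∈ L := hTL (by simp)
  have hb : b ∈ L := hTL (by simp)
  have hc : c ∈ L := hTL (by simp)
  have hcoincide := hgen p a ha b hb c hc (hmem a ha) (hmem b hb) (hmem c hc)
  tauto

lemma exists_hyperplane_of_two_lt_liG (h : 2 < LiG Ω) (p : P2) :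
    ∃ φ : StrongDual ℂ V3, p ∉ hyperplane φ.toLinearMap ∧
      Disjoint (hyperplane φ.toLinearMap) Ω := by
  obtain ⟨ℓ, hℓ, hℓΩ, hp⟩ := exists_isLine_notMem_of_two_lt_liG h p
  obtain ⟨φ, rfl⟩ := hℓ.exists_eq_hyperplane
  exact ⟨φ.toContinuousLinearMap, hp, Set.disjoint_left.mpr hℓΩ⟩

lemma exists_tendsto_pact (h : 2 < LiG Ω) (hΩ : IsOpen Ω) (u : Ultrafilter PSL3)
    (hu : ∀ᶠ g in (u : Filter PSL3), Set.MapsTo (pact g) Ω Ω) {p : P2} (hp : p ∈ Ω) :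
    ∃ q, Filter.Tendsto (fun x : PSL3 × P2 => pact x.1 x.2) ((u : Filter PSL3) ×ˢ 𝓝 p) (𝓝 q) := by
  let A (g : PSL3) : V3 ≃ₗ[ℂ] V3 := Matrix.SpecialLinearGroup.toLin' g.out
  have hA : ∀ g, pact g = Projectivization.map (A g).toLinearMap (A g).injective := fun g => by
    rw [← QuotientGroup.out_eq' g, pact_mk, QuotientGroup.out_eq']
    rfl
  simp only [hA] at hu ⊢
  exact exists_tendsto_map_prod_nhds u _ hΩ hu (exists_hyperplane_of_two_lt_liG h) hp

end Lines

/-! ### The Kulkarni limit set -/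

section Kulkarni

variable {Γ : Subgroup PSL3} {γ : PSL3} {K Ω : Set P2} {z : P2}

lemma pact_mul (g h : PSL3) (x : P2) : pact (g * h) x = pact g (pact h x) := by
  simp [pact]

lemma pact_inv_pact (g : PSL3) (x : P2) : pact g⁻¹ (pact g x) = x := by
  simp [pact]

lemma image_eq_of_mapsTo (h : ∀ γ ∈ Γ, Set.MapsTo (pact γ) Ω Ω) (hγ : γ ∈ Γ) :
    pact γ '' Ω = Ω :=
  (h γ hγ).image_subset.antisymm fun x hx =>
    ⟨pact γ⁻¹ x, h _ (inv_mem hγ) hx, by simpa using pact_inv_pact γ⁻¹ x⟩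

lemma mapsTo_L0 (hγ : γ ∈ Γ) : Set.MapsTo (pact γ) (L0 Γ) (L0 Γ) := by
  refine Set.MapsTo.closure (fun z hz => ?_) (continuous_pact γ)
  refine (hz.image (MulAut.conj γ).injective.injOn).mono ?_
  rintro _ ⟨g, ⟨hg, hgz⟩, rfl⟩
  refine ⟨mul_mem (mul_mem hγ hg) (inv_mem hγ), ?_⟩
  rw [MulAut.conj_apply, pact_mul, pact_inv_pact, pact_mul, hgz]

lemma mapsTo_setCluster (hγ : γ ∈ Γ) :
    Set.MapsTo (pact γ) (setCluster Γ K) (setCluster Γ K) := by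
  intro w hw U hU
  refine ((hw _ ((continuous_pact γ).continuousAt hU)).image
    (mul_right_injective γ).injOn).mono ?_
  rintro _ ⟨g, ⟨hg, _, ⟨k, hk, rfl⟩, hkU⟩, rfl⟩
  exact ⟨mul_mem hγ hg, _, ⟨k, hk, pact_mul γ g k⟩, hkU⟩

lemma orbitCluster_eq_setCluster_singleton (Γ : Subgroup PSL3) (z : P2) :
    orbitCluster Γ z = setCluster Γ {z} := by
  simp [orbitCluster, setCluster]

lemma mapsTo_L1 (hγ : γ ∈ Γ) : Set.MapsTo (pact γ) (L1 Γ) (L1 Γ) := by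
  simp only [L1, orbitCluster_eq_setCluster_singleton]
  exact (Set.mapsTo_iUnion₂_iUnion₂ fun _ _ => mapsTo_setCluster hγ).closure (continuous_pact γ)

lemma mapsTo_L2 (hγ : γ ∈ Γ) : Set.MapsTo (pact γ) (L2 Γ) (L2 Γ) :=
  (Set.mapsTo_iUnion₂_iUnion₂ fun _ _ => mapsTo_setCluster hγ).closure (continuous_pact γ)

lemma mapsTo_kulkarniRegion (hγ : γ ∈ Γ) :
    Set.MapsTo (pact γ) (kulkarniRegion Γ) (kulkarniRegion Γ) := by
  have hlimit : Set.MapsTo (pact γ⁻¹) (kulkarniLimit Γ) (kulkarniLimit Γ) :=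
    have hγ' : γ⁻¹ ∈ Γ := inv_mem hγ
    ((mapsTo_L0 hγ').union_union (mapsTo_L1 hγ')).union_union (mapsTo_L2 hγ')
  intro x hx hγx
  exact hx (pact_inv_pact γ x ▸ hlimit hγx)

lemma exists_mem_setCluster {C : Set P2} (hC : IsCompact C)
    (h : {γ : PSL3 | γ ∈ Γ ∧ (pact γ '' K ∩ C).Nonempty}.Infinite) :
    ∃ w ∈ C, w ∈ setCluster Γ K := by
  contrapose! h
  simp only [setCluster, Set.mem_ofPred_eq, not_forall, Set.not_infinite] at h
  choose! U hU hfin using h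
  obtain ⟨t, htC, hCt⟩ := hC.elim_nhds_subcover U hU
  refine (t.finite_toSet.biUnion fun w hw => hfin w (htC w hw)).subset ?_
  rintro γ ⟨hγ, y, hy, hyC⟩
  obtain ⟨w, hwt, hyw⟩ := Set.mem_iUnion₂.mp (hCt hyC)
  exact Set.mem_biUnion hwt ⟨hγ, y, hy, hyw⟩

lemma isOpen_kulkarniRegion (Γ : Subgroup PSL3) : IsOpen (kulkarniRegion Γ) :=
  ((isClosed_closure.union isClosed_closure).union isClosed_closure).isOpen_compl

lemma setCluster_subset_L2 (hK : IsCompact K) (hKL : K ⊆ (L0 Γ ∪ L1 Γ)ᶜ) :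
    setCluster Γ K ⊆ L2 Γ :=
  (Set.subset_biUnion_of_mem (u := setCluster Γ) (Set.mem_ofPred.mpr ⟨hK, hKL⟩)).trans
    subset_closure

lemma orbitCluster_subset_L1 (hz : z ∉ L0 Γ) : orbitCluster Γ z ⊆ L1 Γ :=
  (Set.subset_biUnion_of_mem (u := orbitCluster Γ) hz).trans subset_closure

theorem actsPropDiscOn_kulkarniRegion (hne : (kulkarniRegion Γ).Nonempty) :
    ActsPropDiscOn Γ (kulkarniRegion Γ) := by
  refine ⟨hne, isOpen_kulkarniRegion Γ,
    fun _ => image_eq_of_mapsTo fun _ => mapsTo_kulkarniRegion, fun K hK hKc => ?_⟩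
  by_contra hinf
  obtain ⟨w, hwK, hw⟩ := exists_mem_setCluster hKc hinf
  have hKL : K ⊆ (L0 Γ ∪ L1 Γ)ᶜ := hK.trans (Set.compl_subset_compl.mpr Set.subset_union_left)
  exact hK hwK (Or.inr (setCluster_subset_L2 hKc hKL hw))

end Kulkarni

/-! ### Domains of proper discontinuity -/

section ProperlyDiscontinuous

open Filter

variable {Γ : Subgroup PSL3} {K Ω : Set P2} {w z : P2}

namespace ActsPropDiscOn

lemma isOpen (h : ActsPropDiscOn Γ Ω) : IsOpen Ω := h.2.1

lemma mapsTo (h : ActsPropDiscOn Γ Ω) {γ : PSL3} (hγ : γ ∈ Γ) : Set.MapsTo (pact γ) Ω Ω :=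
  Set.mapsTo_iff_image_subset.mpr (h.2.2.1 γ hγ).subset

lemma pact_mem_iff (h : ActsPropDiscOn Γ Ω) {γ : PSL3} (hγ : γ ∈ Γ) : pact γ z ∈ Ω ↔ z ∈ Ω :=
  ⟨fun hz => pact_inv_pact γ z ▸ h.mapsTo (inv_mem hγ) hz, fun hz => h.mapsTo hγ hz⟩

lemma finite_of_isCompact (h : ActsPropDiscOn Γ Ω) (hK : IsCompact K) (hKΩ : K ⊆ Ω) :
    {γ : PSL3 | γ ∈ Γ ∧ (pact γ '' K ∩ K).Nonempty}.Finite :=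
  h.2.2.2 K hKΩ hK

lemma disjoint_L0 (h : ActsPropDiscOn Γ Ω) : Disjoint Ω (L0 Γ) := by
  refine Disjoint.closure_right (Set.disjoint_left.mpr fun z hz hinf => hinf ?_) h.isOpen
  simpa [eq_comm] using
    h.finite_of_isCompact isCompact_singleton (Set.singleton_subset_iff.mpr hz)

lemma disjoint_setCluster (h : ActsPropDiscOn Γ Ω) (hK : IsCompact K) (hKΩ : K ⊆ Ω) :
    Disjoint Ω (setCluster Γ K) := by
  rw [Set.disjoint_left]
  intro w hw hwK
  obtain ⟨C, hC, hCΩ, hCc⟩ := local_compact_nhds (h.isOpen.mem_nhds hw)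
  refine hwK C hC ((h.finite_of_isCompact (hK.union hCc) (Set.union_subset hKΩ hCΩ)).subset ?_)
  exact fun γ hγ => ⟨hγ.1, hγ.2.mono (Set.inter_subset_inter
    (Set.image_mono Set.subset_union_left) Set.subset_union_right)⟩

lemma disjoint_L1 (h : ActsPropDiscOn Γ Ω) : Disjoint Ω (L1 Γ) := by
  refine Disjoint.closure_right (Set.disjoint_iUnion₂_right.mpr fun z _ => ?_) h.isOpen
  rw [Set.disjoint_left]
  intro w hw hwz
  obtain ⟨γ, hγ, hγz⟩ := (hwz Ω (h.isOpen.mem_nhds hw)).nonempty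
  have hz : {z} ⊆ Ω := Set.singleton_subset_iff.mpr ((h.pact_mem_iff hγ).mp hγz)
  rw [orbitCluster_eq_setCluster_singleton] at hwz
  exact Set.disjoint_left.mp (h.disjoint_setCluster isCompact_singleton hz) hw hwz

end ActsPropDiscOn

lemma mem_orbitCluster_of_tendsto {α : Type*} {l : Filter α} [l.NeBot] {g : α → PSL3}
    (hg : Tendsto g l cofinite) (hgΓ : ∀ᶠ a in l, g a ∈ Γ)
    (h : Tendsto (fun a => pact (g a) z) l (𝓝 w)) : w ∈ orbitCluster Γ z := by
  intro U hU hfin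
  obtain ⟨a, ha, haΓ, haU⟩ := ((hg.eventually hfin.compl_mem_cofinite).and
    (hgΓ.and (h.eventually_mem hU))).exists
  exact ha ⟨haΓ, haU⟩

-- `x.1` is the inverse of the element of `Γ` moving a point of `K` to `x.2`.
lemma exists_ultrafilter_of_mem_setCluster (hw : w ∈ setCluster Γ K) :
    ∃ u : Ultrafilter (PSL3 × P2), Tendsto Prod.fst (u : Filter (PSL3 × P2)) cofinite ∧
      Tendsto Prod.snd (u : Filter (PSL3 × P2)) (𝓝 w) ∧
      ∀ᶠ x in (u : Filter (PSL3 × P2)), x.1 ∈ Γ ∧ pact x.1 x.2 ∈ K := by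
  have hfreq : ∃ᶠ x in (cofinite : Filter PSL3) ×ˢ 𝓝 w, x.1 ∈ Γ ∧ pact x.1 x.2 ∈ K := by
    intro hnot
    obtain ⟨A, hA, U, hU, hAU⟩ := mem_prod_iff.mp hnot
    obtain ⟨γ, ⟨hγ, _, ⟨k, hk, rfl⟩, hkU⟩, hγA⟩ :=
      ((hw U hU).sdiff (Set.Finite.inv (mem_cofinite.mp hA))).nonempty
    have hA' : γ⁻¹ ∈ A := by simpa using hγA
    exact hAU (Set.mk_mem_prod hA' hkU) ⟨inv_mem hγ, by simpa only [pact_inv_pact]⟩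
  obtain ⟨u, hu⟩ := Ultrafilter.exists_le (h := frequently_mem_iff_neBot.mp hfreq)
  have hu_le : (u : Filter (PSL3 × P2)) ≤ cofinite ×ˢ 𝓝 w := hu.trans inf_le_left
  exact ⟨u, tendsto_fst.mono_left hu_le, tendsto_snd.mono_left hu_le,
    le_principal_iff.mp (hu.trans inf_le_right)⟩

lemma exists_mem_orbitCluster_of_mem_setCluster (h : 2 < LiG Ω) (hΩ : IsOpen Ω)
    (hΓ : ∀ γ ∈ Γ, Set.MapsTo (pact γ) Ω Ω) (hK : IsCompact K) (hwΩ : w ∈ Ω)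
    (hw : w ∈ setCluster Γ K) : ∃ q ∈ K, q ∈ orbitCluster Γ w := by
  obtain ⟨u, hu_cofinite, hu_nhds, hu⟩ := exists_ultrafilter_of_mem_setCluster hw
  have hu_mem : ∀ᶠ x in (u : Filter (PSL3 × P2)), x.1 ∈ Γ := hu.mono fun _ => And.left
  obtain ⟨q, hq⟩ := exists_tendsto_pact h hΩ (u.map Prod.fst) (hu_mem.mono fun x => hΓ x.1) hwΩ
  have hlim {y : PSL3 × P2 → P2} (hy : Tendsto y u (𝓝 w)) :
      Tendsto (fun x => pact x.1 (y x)) u (𝓝 q) :=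
    hq.comp (tendsto_map.prodMk hy)
  exact ⟨q, hK.isClosed.mem_of_tendsto (hlim hu_nhds) (hu.mono fun _ => And.right),
    mem_orbitCluster_of_tendsto hu_cofinite hu_mem (hlim tendsto_const_nhds)⟩

lemma ActsPropDiscOn.disjoint_L2 (h : ActsPropDiscOn Γ Ω) (h_lines : 2 < LiG Ω) :
    Disjoint Ω (L2 Γ) := by
  refine Disjoint.closure_right (Set.disjoint_iUnion₂_right.mpr fun K hK => ?_) h.isOpen
  rw [Set.disjoint_left]
  intro w hw hwK
  obtain ⟨q, hqK, hqw⟩ := exists_mem_orbitCluster_of_mem_setCluster h_lines h.isOpen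
    (fun _ => h.mapsTo) hK.1 hw hwK
  exact hK.2 hqK (Or.inr (orbitCluster_subset_L1 (Set.disjoint_left.mp h.disjoint_L0 hw) hqw))

theorem ActsPropDiscOn.subset_kulkarniRegion (h : ActsPropDiscOn Γ Ω) (h_lines : 2 < LiG Ω) :
    Ω ⊆ kulkarniRegion Γ :=
  Set.subset_compl_iff_disjoint_right.mpr
    ((h.disjoint_L0.union_right h.disjoint_L1).union_right (h.disjoint_L2 h_lines))

theorem MaxDisc.eq_kulkarniRegion (h : MaxDisc Γ Ω) (h_lines : 2 < LiG Ω) :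
    kulkarniRegion Γ = Ω :=
  have hsub : Ω ⊆ kulkarniRegion Γ := h.1.subset_kulkarniRegion h_lines
  h.2 _ (actsPropDiscOn_kulkarniRegion (h.1.1.mono hsub)) hsub

end ProperlyDiscontinuous

theorem liG_le_two_of_maximal_of_liG_kulkarni_le_two
    (Γ : Subgroup PSL3) (hΓ : DiscreteTopology ↥Γ) (Ω : Set P2)
    (hmax : MaxDisc Γ Ω) (h : LiG (kulkarniRegion Γ) ≤ 2) :
    LiG Ω ≤ 2 := by
  by_contra! h_lines
  exact h_lines.not_ge (hmax.eq_kulkarniRegion h_lines ▸ h)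
end
end

section
/- Let Γ ⊂ PSL(3,ℂ) be a discrete group and let Ω ⊆ ℙ²_ℂ be an open Γ-invariant set with LiG(Ω) = 2. Then there exists a point p ∈ ℙ²_ℂ such that γ(p) = p for every γ ∈ Γ; namely, all complex lines contained in ℙ²_ℂ∖Ω pass through a single common point, and this point is fixed by Γ. -/
/-! As `LiG Ω > 1`, two distinct lines avoid `Ω`; they meet in a single point `p`. A third line
avoiding `Ω` but missing `p` would form with them a triple in general position, contradicting
`LiG Ω < 3`; hence `p` is the only point common to all lines avoiding `Ω`. A projective map sending
`Ω` into itself pulls lines avoiding `Ω` back to lines avoiding `Ω`, so it preserves this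
intersection and fixes `p`. -/

open scoped LinearAlgebra.Projectivization
open Projectivization Matrix Topology

noncomputable section

open Classical

section LinearAlgebra

variable {K V : Type*} [DivisionRing K] [AddCommGroup V] [Module K V]

lemma isCoatom_of_finrank_add_one_eq {W : Submodule K V}
    (hW : Module.finrank K W + 1 = Module.finrank K V) : IsCoatom W := by
  have : FiniteDimensional K V := Module.finite_of_finrank_eq_succ hW.symm
  refine ⟨?_, fun U hWU => Submodule.eq_top_of_finrank_eq ?_⟩
  · rintro rfl
    simp at hW
  · have hlt := Submodule.finrank_lt_finrank_of_lt hWU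
    have hle := Submodule.finrank_le U
    lia

lemma finrank_inf_add_two_of_ne {W₁ W₂ : Submodule K V}
    (h₁ : Module.finrank K W₁ + 1 = Module.finrank K V)
    (h₂ : Module.finrank K W₂ + 1 = Module.finrank K V) (hne : W₁ ≠ W₂) :
    Module.finrank K ↥(W₁ ⊓ W₂) + 2 = Module.finrank K V := by
  have : FiniteDimensional K V := Module.finite_of_finrank_eq_succ h₁.symm
  have hsup : W₁ ⊔ W₂ = ⊤ := (isCoatom_of_finrank_add_one_eq h₁).sup_eq_top_of_ne
    (isCoatom_of_finrank_add_one_eq h₂) hne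
  have hsum := Submodule.finrank_sup_add_finrank_inf_eq W₁ W₂
  rw [hsup, finrank_top] at hsum
  lia

lemma setOf_submodule_le_eq_singleton {W : Submodule K V} (hW : Module.finrank K W = 1) :
    {p : ℙ K V | p.submodule ≤ W} = {Projectivization.mk'' W hW} := by
  have : FiniteDimensional K W := Module.finite_of_finrank_eq_succ hW
  ext p
  rw [Set.mem_ofPred_eq, Set.mem_singleton_iff, ← Projectivization.submodule_injective.eq_iff,
    Projectivization.submodule_mk'']
  refine ⟨fun hp => ?_, le_of_eq⟩
  exact Submodule.eq_of_le_of_finrank_eq hp (p.finrank_submodule.trans hW.symm)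

lemma submodule_map_le_iff {L V' : Type*} [DivisionRing L] [AddCommGroup V'] [Module L V']
    {σ : K →+* L} (f : V →ₛₗ[σ] V') (hf : Function.Injective f) (p : ℙ K V) (W : Submodule L V') :
    (Projectivization.map f hf p).submodule ≤ W ↔ p.submodule ≤ W.comap f := by
  induction p using Projectivization.ind with
  | h v hv =>
    simp only [Projectivization.map_mk, Projectivization.submodule_mk,
      Submodule.span_singleton_le_iff_mem, Submodule.mem_comap]

end LinearAlgebra

lemma IsLine.exists_inter_eq_singleton {ℓ₁ ℓ₂ : Set P2} (h₁ : IsLine ℓ₁) (h₂ : IsLine ℓ₂)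
    (hne : ℓ₁ ≠ ℓ₂) : ∃ p : P2, ℓ₁ ∩ ℓ₂ = {p} := by
  obtain ⟨W₁, hW₁, rfl⟩ := h₁
  obtain ⟨W₂, hW₂, rfl⟩ := h₂
  have hV : Module.finrank ℂ V3 = 3 := Module.finrank_fin_fun ℂ
  have hinf : Module.finrank ℂ ↥(W₁ ⊓ W₂) + 2 = Module.finrank ℂ V3 :=
    finrank_inf_add_two_of_ne (by rw [hW₁, hV]) (by rw [hW₂, hV]) (by rintro rfl; exact hne rfl)
  refine ⟨Projectivization.mk'' (W₁ ⊓ W₂) (by lia), ?_⟩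
  simp only [← setOf_submodule_le_eq_singleton, le_inf_iff, Set.ofPred_and]

lemma IsLine.preimage_pact {ℓ : Set P2} (hℓ : IsLine ℓ) (γ : PSL3) : IsLine (pact γ ⁻¹' ℓ) := by
  obtain ⟨A, rfl⟩ := QuotientGroup.mk_surjective γ
  obtain ⟨W, hW, rfl⟩ := hℓ
  let e : V3 ≃ₗ[ℂ] V3 := Matrix.SpecialLinearGroup.toLin' A
  refine ⟨W.comap (e : V3 →ₗ[ℂ] V3), ?_, ?_⟩
  · rw [Submodule.comap_equiv_eq_map_symm, LinearEquiv.finrank_map_eq, hW]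
  · rw [pact_mk]
    exact Set.ext fun p => submodule_map_le_iff (e : V3 →ₗ[ℂ] V3) e.injective p W

lemma mapsTo_pact_sInter_linesIn {γ : PSL3} {S : Set P2} (hS : pact γ ⁻¹' S ⊆ S) :
    Set.MapsTo (pact γ) (⋂₀ linesIn S) (⋂₀ linesIn S) :=
  fun _ hp ℓ hℓ => hp (pact γ ⁻¹' ℓ) ⟨hℓ.1.preimage_pact γ, (Set.preimage_mono hℓ.2).trans hS⟩

lemma inGenPos_triple {ℓ₁ ℓ₂ ℓ₃ : Set P2} (h : ℓ₁ ∩ ℓ₂ ∩ ℓ₃ = ∅) : InGenPos {ℓ₁, ℓ₂, ℓ₃} := by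
  have hno : ∀ p, p ∈ ℓ₁ → p ∈ ℓ₂ → p ∉ ℓ₃ := fun p h₁ h₂ h₃ => h.le ⟨⟨h₁, h₂⟩, h₃⟩
  intro p a ha b hb c hc hpa hpb hpc
  simp only [Set.mem_insert_iff, Set.mem_singleton_iff] at ha hb hc
  grind

lemma encard_le_liG {Ω : Set P2} {L : Set (Set P2)} (hL : L ∈ genFamilies Ω) :
    L.encard ≤ LiG Ω :=
  le_iSup₂ (f := fun (L : Set (Set P2)) (_ : L ∈ genFamilies Ω) => L.encard) L hL

lemma liG_le_li (Ω : Set P2) : LiG Ω ≤ Li Ω :=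
  iSup₂_le fun _ hL => Set.encard_le_encard hL.1

lemma three_le_liG {Ω ℓ₁ ℓ₂ ℓ₃ : Set P2} (h₁ : ℓ₁ ∈ linesIn Ωᶜ) (h₂ : ℓ₂ ∈ linesIn Ωᶜ)
    (h₃ : ℓ₃ ∈ linesIn Ωᶜ) (h₁₂ : ℓ₁ ≠ ℓ₂) (h₁₃ : ℓ₁ ≠ ℓ₃) (h₂₃ : ℓ₂ ≠ ℓ₃)
    (hinter : ℓ₁ ∩ ℓ₂ ∩ ℓ₃ = ∅) : 3 ≤ LiG Ω := by
  have hmem : {ℓ₁, ℓ₂, ℓ₃} ∈ genFamilies Ω := by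
    refine ⟨?_, inGenPos_triple hinter⟩
    rintro ℓ (rfl | rfl | rfl) <;> assumption
  rw [← Set.encard_eq_three.mpr ⟨ℓ₁, ℓ₂, ℓ₃, h₁₂, h₁₃, h₂₃, rfl⟩]
  exact encard_le_liG hmem

lemma exists_sInter_linesIn_eq_singleton {Ω : Set P2} (h2 : LiG Ω = 2) :
    ∃ p : P2, ⋂₀ linesIn Ωᶜ = {p} := by
  have hLi : 1 < Li Ω := lt_of_lt_of_le (by rw [h2]; decide) (liG_le_li Ω)
  obtain ⟨ℓ₁, h₁, ℓ₂, h₂, hne⟩ := Set.one_lt_encard_iff_nontrivial.mp hLi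
  obtain ⟨p, hp⟩ := h₁.1.exists_inter_eq_singleton h₂.1 hne
  obtain ⟨hp₁, hp₂⟩ : p ∈ ℓ₁ ∩ ℓ₂ := hp.ge rfl
  refine ⟨p, Set.Subset.antisymm (fun q hq => hp.le ⟨hq ℓ₁ h₁, hq ℓ₂ h₂⟩) ?_⟩
  refine Set.singleton_subset_iff.mpr fun ℓ hℓ => ?_
  by_contra hpℓ
  have hthree : 3 ≤ LiG Ω := three_le_liG h₁ h₂ hℓ hne (by rintro rfl; exact hpℓ hp₁)
    (by rintro rfl; exact hpℓ hp₂) (by rwa [hp, Set.singleton_inter_eq_empty])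
  rw [h2] at hthree
  exact absurd hthree (by decide)

theorem exists_fixed_point_of_liG_eq_two_general {Ω : Set P2} (h2 : LiG Ω = 2) :
    ∃ p : P2, (∀ γ : PSL3, Set.MapsTo (pact γ) Ω Ω → pact γ p = p) ∧ ⋂₀ linesIn Ωᶜ = {p} := by
  obtain ⟨p, hp⟩ := exists_sInter_linesIn_eq_singleton h2
  refine ⟨p, fun γ hγ => ?_, hp⟩
  have hpre : pact γ ⁻¹' Ωᶜ ⊆ Ωᶜ := Set.compl_subset_compl.mpr hγ
  have hmaps := mapsTo_pact_sInter_linesIn hpre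
  rw [hp] at hmaps
  exact hmaps rfl

theorem exists_fixed_point_of_liG_eq_two
    (Γ : Subgroup PSL3) (hΓ : DiscreteTopology ↥Γ) (Ω : Set P2)
    (hopen : IsOpen Ω) (hinv : ∀ γ ∈ Γ, pact γ '' Ω = Ω) (h2 : LiG Ω = 2) :
    ∃ p : P2, (∀ γ ∈ Γ, pact γ p = p) ∧
      ∀ ℓ : Set P2, IsLine ℓ → ℓ ⊆ Ωᶜ → p ∈ ℓ := by
  obtain ⟨p, hfix, hp⟩ := exists_fixed_point_of_liG_eq_two_general h2
  exact ⟨p, fun γ hγ => hfix γ (Set.mapsTo_iff_image_subset.mpr (hinv γ hγ).le),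
    fun ℓ hℓ hsub => hp.ge rfl ℓ ⟨hℓ, hsub⟩⟩
end
end

section
/- Let Γ ⊂ PSL(3,ℂ) be a discrete group and let Ω ⊆ ℙ²_ℂ be an open Γ-invariant set such that L0(Γ) ⊆ ℙ²_ℂ∖Ω, LiG(Ω) = 2 and 3 ≤ Li(Ω) < ∞. Let p be the common point of all complex lines contained in ℙ²_ℂ∖Ω (which is fixed by Γ). Then for every complex line ℓ not containing p, the group Π_{p,ℓ}(Γ) of induced biholomorphisms of ℓ is finite; consequently Ker(Π_{p,ℓ}) is a normal subgroup of Γ of finite index. -/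
/-!
The group `Γ` permutes the finitely many lines of `Ωᶜ`, all of which pass through the fixed
point `p`. Intersecting with `ℓ` identifies the pencil of lines through `p`, that is
`ℙ(ℂ³ / p) ≅ ℙ¹`, with `ℓ`, and turns the action of `Γ` on the pencil into its projection to `ℓ`.
A linear map of a two-dimensional space with three invariant lines has two equal eigenvalues, hence
is a scalar; so an element of `Γ` fixing at least three lines of the pencil fixes all of them.
The projection of `Γ` to `ℓ` therefore factors through the permutations of the lines of `Ωᶜ`, and
its kernel is the kernel of this permutation action.
-/

open scoped LinearAlgebra.Projectivization
open Projectivization Matrix Topology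

noncomputable section

open Classical

open Module Module.End Submodule
open scoped Pointwise

section DivisionRing

variable {K V : Type*} [DivisionRing K] [AddCommGroup V] [Module K V]

lemma sup_eq_top_of_finrank_eq_one (hV : finrank K V = 2) {L L' : Submodule K V}
    (hL : finrank K L = 1) (hL' : finrank K L' = 1) (hne : L ≠ L') : L ⊔ L' = ⊤ := by
  have : FiniteDimensional K V := .of_finrank_pos (by omega)
  exact eq_top_of_disjoint L L' (by omega)
    ((isAtom_iff_finrank_eq_one.2 hL).disjoint_of_ne (isAtom_iff_finrank_eq_one.2 hL') hne)

lemma finrank_map_mkQ_add_finrank {P M : Submodule K V} [FiniteDimensional K M] (h : P ≤ M) :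
    finrank K (M.map P.mkQ) + finrank K P = finrank K M := by
  have hrank := (P.mkQ.domRestrict M).finrank_range_add_finrank_ker
  rwa [LinearMap.range_domRestrict, LinearMap.ker_domRestrict, ker_mkQ,
    (comapSubtypeEquivOfLe h).finrank_eq] at hrank

end DivisionRing

lemma map_mkQ_mem_invtSubmodule {R V : Type*} [Ring R] [AddCommGroup V] [Module R V]
    {f : End R V} {P M : Submodule R V} (hP : P ≤ P.comap f) (hM : M ∈ f.invtSubmodule) :
    M.map P.mkQ ∈ invtSubmodule (P.mapQ P f hP) := by
  rw [mem_invtSubmodule_iff_map_le] at hM ⊢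
  rw [← Submodule.map_comp, mapQ_mkQ, Submodule.map_comp]
  exact map_mono hM

section Field

variable {K V ι : Type*} [Field K] [AddCommGroup V] [Module K V] {f : End K V}

lemma exists_le_eigenspace_of_finrank_eq_one {L : Submodule K V} (hL : finrank K L = 1)
    (hf : L ∈ f.invtSubmodule) : ∃ μ, L ≤ f.eigenspace μ := by
  obtain ⟨μ, hμ, -⟩ := LinearMap.existsUnique_eq_smul_id_of_finrank_eq_one hL
    (f.restrict ((mem_invtSubmodule_iff_forall_mem_of_mem f).1 hf))
  exact ⟨μ, fun x hx =>
    mem_eigenspace_iff.2 (congrArg Subtype.val (LinearMap.congr_fun hμ ⟨x, hx⟩))⟩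

lemma exists_eq_smul_one_of_three_le_card (hV : finrank K V = 2) {L : ι → Submodule K V}
    (hL : ∀ i, finrank K (L i) = 1) (hinj : Function.Injective L)
    (hf : ∀ i, L i ∈ f.invtSubmodule) (hι : 3 ≤ ENat.card ι) : ∃ a : K, f = a • 1 := by
  have : FiniteDimensional K V := .of_finrank_pos (by omega)
  choose μ hμ using fun i => exists_le_eigenspace_of_finrank_eq_one (hL i) (hf i)
  have hμ_ninj : ¬ Function.Injective μ := by
    intro hμ_inj
    choose v hvL hv using fun i =>
      exists_mem_ne_zero_of_ne_bot (isAtom_iff_finrank_eq_one.2 (hL i)).ne_bot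
    have hli : LinearIndependent K v :=
      f.eigenvectors_linearIndependent' μ hμ_inj v fun i => ⟨hμ i (hvL i), hv i⟩
    have := hli.finite
    have := Fintype.ofFinite ι
    have hle := hli.fintype_card_le_finrank
    rw [ENat.card_eq_coe_fintype_card] at hι
    have : 3 ≤ Fintype.card ι := by exact_mod_cast hι
    omega
  obtain ⟨i, j, hμij, hij⟩ := Function.not_injective_iff.1 hμ_ninj
  have htop : f.eigenspace (μ i) = ⊤ := by
    rw [eq_top_iff, ← sup_eq_top_of_finrank_eq_one hV (hL i) (hL j) (hinj.ne hij)]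
    exact sup_le (hμ i) (hμij ▸ hμ j)
  exact ⟨μ i, LinearMap.ext fun x => mem_eigenspace_iff.1 (htop ▸ mem_top)⟩

lemma mem_invtSubmodule_of_three_le_card {P N : Submodule K V}
    (hV : finrank K V = finrank K P + 2) (hP : P ≤ P.comap f) {M : ι → Submodule K V}
    (hM : ∀ i, finrank K (M i) = finrank K P + 1) (hPM : ∀ i, P ≤ M i)
    (hinj : Function.Injective M) (hf : ∀ i, M i ∈ f.invtSubmodule) (hι : 3 ≤ ENat.card ι)
    (hPN : P ≤ N) : N ∈ f.invtSubmodule := by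
  have : FiniteDimensional K V := .of_finrank_pos (by omega)
  obtain ⟨a, ha⟩ : ∃ a : K, P.mapQ P f hP = a • 1 := by
    refine exists_eq_smul_one_of_three_le_card (L := fun i => (M i).map P.mkQ) ?_ (fun i => ?_)
      (fun i j hij => hinj ?_) (fun i => map_mkQ_mem_invtSubmodule hP (hf i)) hι
    · have := P.finrank_quotient_add_finrank
      omega
    · have := finrank_map_mkQ_add_finrank (hPM i)
      have := hM i
      omega
    · simpa only [comap_map_mkQ, sup_of_le_right (hPM _)] using congrArg (comap P.mkQ) hij
  rw [mem_invtSubmodule_iff_forall_mem_of_mem]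
  intro x hx
  have hfx : f x - a • x ∈ P := by
    rw [← Submodule.Quotient.eq, ← mapQ_apply P P f (h := hP), ha]
    rfl
  simpa using N.add_mem (hPN hfx) (N.smul_mem a hx)

end Field

section Projectivization

variable {K V : Type*} [DivisionRing K] [AddCommGroup V] [Module K V]

lemma coe_projectivization (M : Submodule K V) :
    (M.projectivization : Set (ℙ K V)) = {x | x.submodule ≤ M} :=
  Set.ext (mem_projectivization_iff_submodule_le M)

lemma smul_coe_projectivization (e : V ≃ₗ[K] V) (M : Submodule K V) :
    e • (M.projectivization : Set (ℙ K V)) = (M.map (e : V →ₗ[K] V)).projectivization := by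
  ext x
  rw [Set.mem_smul_set_iff_inv_smul_mem]
  induction x using Projectivization.ind with
  | h v hv =>
    simp only [smul_mk, SetLike.mem_coe, mk_mem_projectivization_iff]
    exact (mem_map_equiv M).symm

lemma smul_coe_projectivization_eq_self {e : V ≃ₗ[K] V} {M : Submodule K V}
    [FiniteDimensional K M] :
    e • (M.projectivization : Set (ℙ K V)) = M.projectivization ↔
      M ∈ invtSubmodule (e : V →ₗ[K] V) := by
  rw [smul_coe_projectivization, SetLike.coe_set_eq, projectivization.injective.eq_iff,
    mem_invtSubmodule_iff_map_le]
  exact ⟨fun h => h.le, fun h => eq_of_le_of_finrank_eq h (e.finrank_map_eq M)⟩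

lemma submodule_le_comap_of_smul_eq_self {e : V ≃ₗ[K] V} {x : ℙ K V} (hx : e • x = x) :
    x.submodule ≤ x.submodule.comap (e : V →ₗ[K] V) := by
  induction x using Projectivization.ind with
  | h v hv =>
    rw [smul_mk, mk_eq_mk_iff'] at hx
    obtain ⟨a, ha⟩ := hx
    rw [submodule_mk, span_singleton_le_iff_mem, mem_comap]
    exact mem_span_singleton.2 ⟨a, ha⟩

lemma finrank_sup_submodule {x y : ℙ K V} (hxy : x ≠ y) :
    finrank K ↥(x.submodule ⊔ y.submodule) = 2 := by
  have hdisj : Disjoint x.submodule y.submodule :=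
    (isAtom_iff_finrank_eq_one.2 x.finrank_submodule).disjoint_of_ne
      (isAtom_iff_finrank_eq_one.2 y.finrank_submodule) (submodule_injective.ne hxy)
  have h := finrank_sup_add_finrank_inf_eq x.submodule y.submodule
  rwa [hdisj.eq_bot, finrank_bot, x.finrank_submodule, y.finrank_submodule] at h

lemma exists_mem_projectivization_of_finrank_lt [FiniteDimensional K V] {M N : Submodule K V}
    (h : finrank K V < finrank K M + finrank K N) :
    ∃ x, x ∈ M.projectivization ∧ x ∈ N.projectivization := by
  have hne : M ⊓ N ≠ ⊥ := fun hMN =>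
    (finrank_add_finrank_le_of_disjoint (disjoint_iff.2 hMN)).not_gt h
  obtain ⟨v, hv, hv0⟩ := exists_mem_ne_zero_of_ne_bot hne
  exact ⟨mk K v hv0, hv.1, hv.2⟩

end Projectivization

lemma exists_linearEquiv_smul_eq (γ : PSL3) : ∃ e : V3 ≃ₗ[ℂ] V3,
    (∀ x : P2, γ • x = e • x) ∧ ∀ S : Set P2, γ • S = e • S := by
  obtain ⟨A, rfl⟩ := QuotientGroup.mk_surjective γ
  have h (x : P2) : (A : PSL3) • x = Matrix.SpecialLinearGroup.toLin' A • x :=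
    congrFun (pact_mk A) x
  exact ⟨_, h, fun S => Set.image_congr fun x _ => h x⟩

section Lines

variable {p x y : P2} {L L' : Set P2} {W : Submodule ℂ V3}

lemma isLine_iff : IsLine L ↔
    ∃ M : Submodule ℂ V3, finrank ℂ M = 2 ∧ L = (M.projectivization : Set P2) := by
  simp only [IsLine, coe_projectivization]

lemma isLine_projectivization (hW : finrank ℂ W = 2) : IsLine (W.projectivization : Set P2) :=
  isLine_iff.2 ⟨W, hW, rfl⟩

lemma IsLine.smul (hL : IsLine L) (γ : PSL3) : IsLine (γ • L) := by
  obtain ⟨M, hM, rfl⟩ := isLine_iff.1 hL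
  obtain ⟨e, -, he⟩ := exists_linearEquiv_smul_eq γ
  rw [he, smul_coe_projectivization]
  exact isLine_projectivization ((e.finrank_map_eq M).trans hM)

lemma IsLine.eq_of_mem (hL : IsLine L) (hL' : IsLine L') (hxy : x ≠ y) (hx : x ∈ L) (hy : y ∈ L)
    (hx' : x ∈ L') (hy' : y ∈ L') : L = L' := by
  obtain ⟨M, hM, rfl⟩ := isLine_iff.1 hL
  obtain ⟨M', hM', rfl⟩ := isLine_iff.1 hL'
  rw [line_unique hxy M M' hM hM' hx hy hx' hy']

lemma IsLine.inter_nonempty (hL : IsLine L) (hL' : IsLine L') : (L ∩ L').Nonempty := by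
  obtain ⟨M, hM, rfl⟩ := isLine_iff.1 hL
  obtain ⟨M', hM', rfl⟩ := isLine_iff.1 hL'
  exact exists_mem_projectivization_of_finrank_lt (by rw [hM, hM', finrank_fin_fun]; norm_num)

/-- The pencil of complex lines through a point `p` of `ℙ²_ℂ`. -/
def pencil (p : P2) : Set (Set P2) := {L | IsLine L ∧ p ∈ L}

lemma smul_mem_pencil {γ : PSL3} (hp : γ • p = p) (hL : L ∈ pencil p) : γ • L ∈ pencil p :=
  ⟨hL.1.smul γ, hp ▸ Set.smul_mem_smul_set hL.2⟩

lemma coe_projectivization_sup_mem_pencil (hxp : x ≠ p) :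
    ((p.submodule ⊔ x.submodule).projectivization : Set P2) ∈ pencil p :=
  ⟨isLine_projectivization (finrank_sup_submodule hxp.symm),
    (mem_projectivization_iff_submodule_le _ _).2 le_sup_left⟩

lemma exists_mem_pencil_of_ne (hxp : x ≠ p) : ∃ L ∈ pencil p, x ∈ L :=
  ⟨_, coe_projectivization_sup_mem_pencil hxp,
    (mem_projectivization_iff_submodule_le _ _).2 le_sup_right⟩

lemma projPt_spec (hW : finrank ℂ W = 2) (hxp : x ≠ p) :
    (projPt p W x).submodule ≤ W ∧ (projPt p W x).submodule ≤ p.submodule ⊔ x.submodule := by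
  have h : ∃ y : P2, y.submodule ≤ W ∧ y.submodule ≤ p.submodule ⊔ x.submodule := by
    obtain ⟨y, hyW, hy⟩ := (isLine_projectivization hW).inter_nonempty
      (coe_projectivization_sup_mem_pencil hxp).1
    exact ⟨y, (mem_projectivization_iff_submodule_le _ _).1 hyW,
      (mem_projectivization_iff_submodule_le _ _).1 hy⟩
  rw [projPt, dif_pos h]
  exact h.choose_spec

lemma projPt_mem_projectivization (hW : finrank ℂ W = 2) (hxp : x ≠ p) :
    projPt p W x ∈ W.projectivization :=
  (mem_projectivization_iff_submodule_le _ _).2 (projPt_spec hW hxp).1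

lemma projPt_mem_of_mem_pencil (hW : finrank ℂ W = 2) (hxp : x ≠ p) (hL : L ∈ pencil p)
    (hx : x ∈ L) : projPt p W x ∈ L := by
  obtain ⟨⟨M, -, rfl⟩, hp⟩ := hL
  exact (projPt_spec hW hxp).2.trans (sup_le hp hx)

lemma eq_of_mem_pencil_of_mem_projectivization (hW : finrank ℂ W = 2)
    (hpW : p ∉ W.projectivization) (hL : L ∈ pencil p) (hx : x ∈ L) (hy : y ∈ L)
    (hxW : x ∈ W.projectivization) (hyW : y ∈ W.projectivization) : x = y := by
  by_contra hxy
  obtain rfl := hL.1.eq_of_mem (isLine_projectivization hW) hxy hx hy hxW hyW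
  exact hpW hL.2

lemma projPt_eq_self (hW : finrank ℂ W = 2) (hpW : p ∉ W.projectivization)
    (hx : x ∈ W.projectivization) : projPt p W x = x := by
  have hxp : x ≠ p := ne_of_mem_of_not_mem hx hpW
  obtain ⟨L, hL, hxL⟩ := exists_mem_pencil_of_ne hxp
  exact eq_of_mem_pencil_of_mem_projectivization hW hpW hL
    (projPt_mem_of_mem_pencil hW hxp hL hxL) hxL (projPt_mem_projectivization hW hxp) hx

lemma projPt_eq_projPt_iff (hW : finrank ℂ W = 2) (hpW : p ∉ W.projectivization)
    (hxp : x ≠ p) (hyp : y ≠ p) (hL : L ∈ pencil p) (hL' : L' ∈ pencil p) (hx : x ∈ L)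
    (hy : y ∈ L') : projPt p W x = projPt p W y ↔ L = L' := by
  have hxL := projPt_mem_of_mem_pencil hW hxp hL hx
  have hyL' := projPt_mem_of_mem_pencil hW hyp hL' hy
  have hxW := projPt_mem_projectivization hW hxp
  have hyW := projPt_mem_projectivization hW hyp
  constructor
  · intro h
    exact hL.1.eq_of_mem hL'.1 (ne_of_mem_of_not_mem hxW hpW) hxL hL.2 (h ▸ hyL') hL'.2
  · rintro rfl
    exact eq_of_mem_pencil_of_mem_projectivization hW hpW hL hxL hyL' hxW hyW

end Lines

section Pencil

variable {p : P2} {W : Submodule ℂ V3} {γ δ : PSL3} {S : Set (Set P2)}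

lemma forall_projPt_smul_eq_iff (hW : finrank ℂ W = 2) (hpW : p ∉ W.projectivization)
    (hγ : γ • p = p) (hδ : δ • p = p) :
    (∀ x ∈ W.projectivization, projPt p W (γ • x) = projPt p W (δ • x)) ↔
      ∀ L ∈ pencil p, γ • L = δ • L := by
  have projPt_smul_iff {x : P2} {L : Set P2} (hx : x ∈ W.projectivization) (hL : L ∈ pencil p)
      (hxL : x ∈ L) :
      projPt p W (γ • x) = projPt p W (δ • x) ↔ γ • L = δ • L := by
    have smul_ne {η : PSL3} (hη : η • p = p) : η • x ≠ p := fun h =>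
      ne_of_mem_of_not_mem hx hpW (smul_left_cancel η (h.trans hη.symm))
    exact projPt_eq_projPt_iff hW hpW (smul_ne hγ) (smul_ne hδ) (smul_mem_pencil hγ hL)
      (smul_mem_pencil hδ hL) (Set.smul_mem_smul_set hxL) (Set.smul_mem_smul_set hxL)
  constructor
  · intro h L hL
    obtain ⟨x, hxL, hx⟩ := hL.1.inter_nonempty (isLine_projectivization hW)
    exact (projPt_smul_iff hx hL hxL).1 (h x hx)
  · intro h x hx
    obtain ⟨L, hL, hxL⟩ := exists_mem_pencil_of_ne (ne_of_mem_of_not_mem hx hpW)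
    exact (projPt_smul_iff hx hL hxL).2 (h L hL)

lemma smul_eq_self_of_three_le_encard (hS : S ⊆ pencil p) (h3 : 3 ≤ S.encard) (hp : γ • p = p)
    (hγ : ∀ L ∈ S, γ • L = L) : ∀ L ∈ pencil p, γ • L = L := by
  obtain ⟨e, he, he_set⟩ := exists_linearEquiv_smul_eq γ
  choose M hM2 hM using fun L : S => isLine_iff.1 (hS L.2).1
  have hM_inj : Function.Injective M := fun L L' h => Subtype.ext (by rw [hM L, hM L', h])
  have hpM (L : S) : p.submodule ≤ M L :=
    (mem_projectivization_iff_submodule_le _ _).1 ((hM L).subset (hS L.2).2)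
  have hMe (L : S) : M L ∈ invtSubmodule (e : V3 →ₗ[ℂ] V3) := by
    rw [← smul_coe_projectivization_eq_self, ← he_set, ← hM, hγ L L.2]
  have hpe : p.submodule ≤ p.submodule.comap (e : V3 →ₗ[ℂ] V3) :=
    submodule_le_comap_of_smul_eq_self (by rw [← he, hp])
  rintro L ⟨hL, hpL⟩
  obtain ⟨N, -, rfl⟩ := isLine_iff.1 hL
  rw [he_set, smul_coe_projectivization_eq_self]
  exact mem_invtSubmodule_of_three_le_card
    (by rw [finrank_fin_fun, p.finrank_submodule]) hpe
    (fun L => by rw [hM2, p.finrank_submodule]) hpM hM_inj hMe h3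
    ((mem_projectivization_iff_submodule_le _ _).1 hpL)

lemma smul_eq_smul_of_three_le_encard (hS : S ⊆ pencil p) (h3 : 3 ≤ S.encard) (hγ : γ • p = p)
    (hδ : δ • p = p) (h : ∀ L ∈ S, γ • L = δ • L) : ∀ L ∈ pencil p, γ • L = δ • L := by
  have hfix : (δ⁻¹ * γ) • p = p := by rw [mul_smul, hγ, inv_smul_eq_iff, hδ]
  simpa only [mul_smul, inv_smul_eq_iff] using
    smul_eq_self_of_three_le_encard hS h3 hfix
      (by simpa only [mul_smul, inv_smul_eq_iff] using h)

end Pencil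

section ProjectionGroup

variable {Γ : Subgroup PSL3} {S : SubMulAction Γ (Set P2)} {p : P2} {W : Submodule ℂ V3}

lemma toPermHom_eq_iff_projPt (hp : ∀ γ ∈ Γ, γ • p = p) (hS : (S : Set (Set P2)) ⊆ pencil p)
    (h3 : 3 ≤ (S : Set (Set P2)).encard) (hW : finrank ℂ W = 2) (hpW : p ∉ W.projectivization)
    {γ δ : Γ} : MulAction.toPermHom Γ S γ = MulAction.toPermHom Γ S δ ↔
      ∀ x ∈ W.projectivization, projPt p W (pact γ x) = projPt p W (pact δ x) := by
  have hperm : MulAction.toPermHom Γ S γ = MulAction.toPermHom Γ S δ ↔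
      ∀ L ∈ S, (γ : PSL3) • L = (δ : PSL3) • L := by
    simp only [Equiv.ext_iff, Subtype.forall, Subtype.ext_iff]
    rfl
  rw [hperm]
  refine Iff.trans ⟨fun h => ?_, fun h L hL => h L (hS hL)⟩
    (forall_projPt_smul_eq_iff hW hpW (hp γ γ.2) (hp δ δ.2)).symm
  exact smul_eq_smul_of_three_le_encard hS h3 (hp γ γ.2) (hp δ δ.2) h

lemma mem_ker_toPermHom_iff_projPt (hp : ∀ γ ∈ Γ, γ • p = p) (hS : (S : Set (Set P2)) ⊆ pencil p)
    (h3 : 3 ≤ (S : Set (Set P2)).encard) (hW : finrank ℂ W = 2) (hpW : p ∉ W.projectivization)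
    {γ : Γ} : γ ∈ (MulAction.toPermHom Γ S).ker ↔
      ∀ x ∈ W.projectivization, projPt p W (pact γ x) = x := by
  rw [MonoidHom.mem_ker, ← map_one (MulAction.toPermHom Γ S),
    toPermHom_eq_iff_projPt hp hS h3 hW hpW]
  refine forall₂_congr fun x hx => ?_
  rw [show pact ((1 : Γ) : PSL3) x = x from one_smul PSL3 x, projPt_eq_self hW hpW hx]

lemma finite_setOf_projPt_pact (hp : ∀ γ ∈ Γ, γ • p = p) (hS : (S : Set (Set P2)) ⊆ pencil p)
    (h3 : 3 ≤ (S : Set (Set P2)).encard) [Finite S] (hW : finrank ℂ W = 2)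
    (hpW : p ∉ W.projectivization) :
    {g : W.projectivization → P2 |
      ∃ γ ∈ Γ, g = fun x : W.projectivization => projPt p W (pact γ (x : P2))}.Finite := by
  have hfac : Function.FactorsThrough
      (fun (γ : Γ) (x : W.projectivization) => projPt p W (pact γ (x : P2)))
      (MulAction.toPermHom Γ S) := fun γ δ h =>
    funext fun x => (toPermHom_eq_iff_projPt hp hS h3 hW hpW).1 h x x.2
  obtain ⟨F, hF⟩ := (Function.factorsThrough_iff _).1 hfac
  refine (Set.finite_range F).subset ?_
  rintro g ⟨γ, hγ, rfl⟩
  exact ⟨MulAction.toPermHom Γ S ⟨γ, hγ⟩, (congrFun hF ⟨γ, hγ⟩).symm⟩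

/-- The lines contained in the complement of a `Γ`-invariant set, with the action of `Γ`. -/
def linesInCompl (Γ : Subgroup PSL3) (Ω : Set P2) (hinv : ∀ γ ∈ Γ, pact γ '' Ω = Ω) :
    SubMulAction Γ (Set P2) where
  carrier := linesIn Ωᶜ
  smul_mem' γ L hL := by
    have hΩ : (γ : PSL3) • Ωᶜ = Ωᶜ := by
      rw [Set.smul_set_compl]
      exact congrArg _ (hinv γ γ.2)
    exact ⟨hL.1.smul γ, hΩ ▸ Set.smul_set_mono hL.2⟩

end ProjectionGroup

theorem projection_group_finite_of_liG_eq_two_general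
    (Γ : Subgroup PSL3) (Ω : Set P2) (hinv : ∀ γ ∈ Γ, pact γ '' Ω = Ω)
    (h3 : 3 ≤ Li Ω) (hfin : Li Ω ≠ ⊤) (p : P2) (hp : ∀ γ ∈ Γ, pact γ p = p)
    (hcommon : ∀ ℓ : Set P2, IsLine ℓ → ℓ ⊆ Ωᶜ → p ∈ ℓ) :
    ∀ (W : Submodule ℂ V3) (ℓ : Set P2), Module.finrank ℂ W = 2 →
      ℓ = {x : P2 | x.submodule ≤ W} → p ∉ ℓ →
      ({g : ℓ → P2 | ∃ γ ∈ Γ, g = fun x : ℓ => projPt p W (pact γ (x : P2))}.Finite ∧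
        ∃ N : Subgroup ↥Γ,
          (∀ γ : ↥Γ, γ ∈ N ↔ ∀ x ∈ ℓ, projPt p W (pact ↑γ x) = x) ∧
          N.Normal ∧ N.FiniteIndex) := by
  intro W ℓ hW hℓ hpℓ
  rw [← coe_projectivization] at hℓ
  subst hℓ
  let S := linesInCompl Γ Ω hinv
  have hS : (S : Set (Set P2)) ⊆ pencil p := fun L hL => ⟨hL.1, hcommon L hL.1 hL.2⟩
  have : Finite S := Set.finite_coe_iff.2 (Set.encard_ne_top_iff.1 hfin)
  exact ⟨finite_setOf_projPt_pact hp hS h3 hW hpℓ, (MulAction.toPermHom Γ S).ker,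
    fun _ => mem_ker_toPermHom_iff_projPt hp hS h3 hW hpℓ, inferInstance, inferInstance⟩

theorem projection_group_finite_of_liG_eq_two
    (Γ : Subgroup PSL3) (hΓ : DiscreteTopology ↥Γ) (Ω : Set P2)
    (hopen : IsOpen Ω) (hinv : ∀ γ ∈ Γ, pact γ '' Ω = Ω)
    (hL0 : L0 Γ ⊆ Ωᶜ) (h2 : LiG Ω = 2) (h3 : 3 ≤ Li Ω) (hfin : Li Ω ≠ ⊤)
    (p : P2) (hp : ∀ γ ∈ Γ, pact γ p = p)
    (hcommon : ∀ ℓ : Set P2, IsLine ℓ → ℓ ⊆ Ωᶜ → p ∈ ℓ) :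
    ∀ (W : Submodule ℂ V3) (ℓ : Set P2), Module.finrank ℂ W = 2 →
      ℓ = {x : P2 | x.submodule ≤ W} → p ∉ ℓ →
      ({g : ℓ → P2 | ∃ γ ∈ Γ, g = fun x : ℓ => projPt p W (pact γ (x : P2))}.Finite ∧
        ∃ N : Subgroup ↥Γ,
          (∀ γ : ↥Γ, γ ∈ N ↔ ∀ x ∈ ℓ, projPt p W (pact ↑γ x) = x) ∧
          N.Normal ∧ N.FiniteIndex) := by
  exact projection_group_finite_of_liG_eq_two_general Γ Ω hinv h3 hfin p hp hcommon
end
end
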